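/- arXiv:quant-ph/0303070 — 4 statements merged into one kernel-verified Lean document; each statement's English description precedes it below -/
import Mathlib

section
/- For all A, B in SU(2), the matrix Mᴴ (A ⊗ B) M, where Mᴴ is the conjugate transpose of the magic basis matrix M, has all entries real, and it is orthogonal: (Mᴴ(A⊗B)M)ᵀ (Mᴴ(A⊗B)M) = I. -/
/-!
The magic basis consists of fixed vectors of an antiunitary involution. With `E = !![0, 1; -1, 0]`
and `S = E ⊗ E`, the entrywise conjugate of `M` is `M.map star = S * M` (`magicM_map_star`). On the
other hand, every `A` in SU(2) satisfies `A.map star * E = E * A` (`IsSU2.map_star_mul_spinFlip`),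
because `Aᴴ = A⁻¹` is the adjugate of `A`. Hence `(A ⊗ B).map star * S = S * (A ⊗ B)`, and
conjugating `U = Mᴴ (A ⊗ B) M` entrywise gives `Mᴴ Sᴴ S (A ⊗ B) M = U`, as `Sᴴ S = 1`. So `U` is
real, and therefore `Uᵀ = Uᴴ`; since `M` and `A ⊗ B` are unitary, so is `U`, which makes it
orthogonal.
-/

open Matrix Kronecker

noncomputable section

def PauliX : Matrix (Fin 2) (Fin 2) ℂ := !![0, 1; 1, 0]
def PauliY : Matrix (Fin 2) (Fin 2) ℂ := !![0, -Complex.I; Complex.I, 0]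
def PauliZ : Matrix (Fin 2) (Fin 2) ℂ := !![1, 0; 0, -1]

/-- Membership in SU(2). -/
def IsSU2 (A : Matrix (Fin 2) (Fin 2) ℂ) : Prop :=
  A ∈ Matrix.unitaryGroup (Fin 2) ℂ ∧ A.det = 1

/-- The computational-basis vector `|ij⟩`. -/
def ket (i j : Fin 2) : (Fin 2 × Fin 2) → ℂ := fun p => if p = (i, j) then 1 else 0

/-- The magic-basis matrix `M`, whose columns are the magic-basis vectors
`|m₁⟩ = (−i/√2)(|01⟩+|10⟩)`, `|m₂⟩ = (1/√2)(|00⟩+|11⟩)`,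
`|m₃⟩ = (−i/√2)(|00⟩−|11⟩)`, `|m₄⟩ = (1/√2)(|01⟩−|10⟩)`.
(Columns are indexed by `(0,0), (0,1), (1,0), (1,1)` in that order.) -/
def magicM : Matrix (Fin 2 × Fin 2) (Fin 2 × Fin 2) ℂ :=
  Matrix.of fun r c =>
    if c = ((0 : Fin 2), (0 : Fin 2)) then
      (-Complex.I / (Real.sqrt 2 : ℂ)) * (ket 0 1 r + ket 1 0 r)
    else if c = ((0 : Fin 2), (1 : Fin 2)) then
      (1 / (Real.sqrt 2 : ℂ)) * (ket 0 0 r + ket 1 1 r)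
    else if c = ((1 : Fin 2), (0 : Fin 2)) then
      (-Complex.I / (Real.sqrt 2 : ℂ)) * (ket 0 0 r - ket 1 1 r)
    else
      (1 / (Real.sqrt 2 : ℂ)) * (ket 0 1 r - ket 1 0 r)

/-- The matrix `E = i Y` of the spin flip; it intertwines the defining representation of SU(2) with
its complex conjugate. -/
def spinFlip : Matrix (Fin 2) (Fin 2) ℂ := !![0, 1; -1, 0]

lemma spinFlip_conjTranspose_mul : spinFlipᴴ * spinFlip = 1 := by
  ext i j
  fin_cases i <;> fin_cases j <;> simp [spinFlip, Matrix.mul_apply]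

lemma IsSU2.map_star_mul_spinFlip {A : Matrix (Fin 2) (Fin 2) ℂ} (hA : IsSU2 A) :
    A.map star * spinFlip = spinFlip * A := by
  obtain ⟨hU, hdet⟩ := hA
  have hleft : Aᴴ * A = 1 := Matrix.mem_unitaryGroup_iff'.mp hU
  have hadj : Aᴴ = A.adjugate := by
    calc Aᴴ = Aᴴ * (A * A.adjugate) := by rw [Matrix.mul_adjugate, hdet, one_smul, mul_one]
      _ = A.adjugate := by rw [← mul_assoc, hleft, one_mul]
  have hentry : ∀ i j, star (A j i) = A.adjugate i j := fun i j => by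
    rw [← hadj, Matrix.conjTranspose_apply]
  ext i j
  fin_cases i <;> fin_cases j <;>
    simp [spinFlip, Matrix.mul_apply] <;>
    simp [starRingEnd_apply, hentry, Matrix.adjugate_fin_two]

/-- The magic-basis vectors are fixed by the two-qubit spin flip `v ↦ (E ⊗ E) (star v)`. -/
lemma magicM_map_star : magicM.map star = (spinFlip ⊗ₖ spinFlip) * magicM := by
  ext ⟨i, j⟩ ⟨k, l⟩
  fin_cases i <;> fin_cases j <;> fin_cases k <;> fin_cases l <;>
    simp [magicM, ket, spinFlip, Matrix.mul_apply, Fintype.sum_prod_type] <;> ring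

lemma magicM_conjTranspose_mul : magicMᴴ * magicM = 1 := by
  have h2 : ((Real.sqrt 2 : ℝ) : ℂ) ^ 2 = 2 := by
    rw [← Complex.ofReal_pow, Real.sq_sqrt (by norm_num)]
    norm_num
  have hne : ((Real.sqrt 2 : ℝ) : ℂ) ≠ 0 := by
    intro h
    norm_num [h] at h2
  ext ⟨i, j⟩ ⟨k, l⟩
  fin_cases i <;> fin_cases j <;> fin_cases k <;> fin_cases l <;>
    simp [magicM, ket, Matrix.mul_apply, Fintype.sum_prod_type] <;>
    field_simp <;> simp [h2] <;> norm_num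

lemma magic_conj_map_star {A B : Matrix (Fin 2) (Fin 2) ℂ} (hA : IsSU2 A) (hB : IsSU2 B) :
    (magicMᴴ * (A ⊗ₖ B) * magicM).map star = magicMᴴ * (A ⊗ₖ B) * magicM := by
  have hmap : ∀ P Q : Matrix (Fin 2 × Fin 2) (Fin 2 × Fin 2) ℂ,
      (P * Q).map star = P.map star * Q.map star :=
    fun P Q => Matrix.map_mul (f := starRingEnd ℂ)
  have hkron : (A ⊗ₖ B).map star = A.map star ⊗ₖ B.map star := by
    ext i j
    simp [Matrix.kroneckerMap_apply]
  have hflip : (A ⊗ₖ B).map star * (spinFlip ⊗ₖ spinFlip) =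
      (spinFlip ⊗ₖ spinFlip) * (A ⊗ₖ B) := by
    rw [hkron, ← Matrix.mul_kronecker_mul, hA.map_star_mul_spinFlip, hB.map_star_mul_spinFlip,
      Matrix.mul_kronecker_mul]
  have hS : (spinFlip ⊗ₖ spinFlip)ᴴ * (spinFlip ⊗ₖ spinFlip) = 1 := by
    rw [Matrix.conjTranspose_kronecker, ← Matrix.mul_kronecker_mul, spinFlip_conjTranspose_mul,
      Matrix.one_kronecker_one]
  have hM : magicMᴴ.map star = magicMᴴ * (spinFlip ⊗ₖ spinFlip)ᴴ := by
    rw [← Matrix.conjTranspose_mul, ← magicM_map_star]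
    rfl
  rw [hmap, hmap, hM, magicM_map_star]
  calc magicMᴴ * (spinFlip ⊗ₖ spinFlip)ᴴ * (A ⊗ₖ B).map star * ((spinFlip ⊗ₖ spinFlip) * magicM)
      = magicMᴴ * (spinFlip ⊗ₖ spinFlip)ᴴ *
          ((A ⊗ₖ B).map star * (spinFlip ⊗ₖ spinFlip)) * magicM := by simp only [mul_assoc]
    _ = magicMᴴ * ((spinFlip ⊗ₖ spinFlip)ᴴ * (spinFlip ⊗ₖ spinFlip)) * (A ⊗ₖ B) * magicM := by
        rw [hflip]
        simp only [mul_assoc]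
    _ = magicMᴴ * (A ⊗ₖ B) * magicM := by rw [hS, mul_one]

/-- in the magic basis, local special unitaries are real orthogonal matrices. -/
theorem local_unitary_real_orthogonal_in_magic_basis
    (A B : Matrix (Fin 2) (Fin 2) ℂ) (hA : IsSU2 A) (hB : IsSU2 B) :
    (∀ i j, ((magicMᴴ * (A ⊗ₖ B) * magicM) i j).im = 0) ∧
      (magicMᴴ * (A ⊗ₖ B) * magicM)ᵀ * (magicMᴴ * (A ⊗ₖ B) * magicM) = 1 := by
  have hreal := magic_conj_map_star hA hB
  refine ⟨fun i j => Complex.conj_eq_iff_im.mp (congrFun (congrFun hreal i) j), ?_⟩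
  have hT : (magicMᴴ * (A ⊗ₖ B) * magicM)ᵀ = (magicMᴴ * (A ⊗ₖ B) * magicM)ᴴ := by
    conv_lhs => rw [← hreal]
    rfl
  have hAB : (A ⊗ₖ B)ᴴ * (A ⊗ₖ B) = 1 := by
    have h1 : Aᴴ * A = 1 := Matrix.mem_unitaryGroup_iff'.mp hA.1
    have h2 : Bᴴ * B = 1 := Matrix.mem_unitaryGroup_iff'.mp hB.1
    rw [Matrix.conjTranspose_kronecker, ← Matrix.mul_kronecker_mul, h1, h2,
      Matrix.one_kronecker_one]
  have hMM : magicM * magicMᴴ = 1 := mul_eq_one_comm.mp magicM_conjTranspose_mul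
  rw [hT, Matrix.conjTranspose_mul, Matrix.conjTranspose_mul, Matrix.conjTranspose_conjTranspose]
  calc magicMᴴ * ((A ⊗ₖ B)ᴴ * magicM) * (magicMᴴ * (A ⊗ₖ B) * magicM)
      = magicMᴴ * ((A ⊗ₖ B)ᴴ * (magicM * magicMᴴ) * (A ⊗ₖ B)) * magicM := by
        simp only [mul_assoc]
    _ = 1 := by rw [hMM, mul_one, hAB, mul_one, magicM_conjTranspose_mul]

end
end

section
/- Let a, b ∈ ℝ³ and α_1 > α_2 > α_3 with α_2 ≥ |α_3|, and let B_1 = θ_1^{(3)} where θ_1^{(3)} = (1/6)(−α_1(a_2²+a_3²+b_2²+b_3²) + 2α_2 a_3 b_3 + 2α_3 a_2 b_2). Then B_1 = 0 if and only if a_2 = a_3 = b_2 = b_3 = 0. -/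
/-!
With `S = a₂² + a₃² + b₂² + b₃²`, the coefficient satisfies
`-6 B₁ = (α₁ - α₂) S + α₂ (a₃ - b₃)² + (α₂ + α₃)/2 (a₂ - b₂)² + (α₂ - α₃)/2 (a₂ + b₂)²`.
Since `|α₃| ≤ α₂ < α₁`, every term is nonnegative and the first is a positive multiple of `S`,
so `B₁ = 0` forces `S = 0`.
-/

/-- with `α₁ > α₂ > α₃`, `α₂ ≥ |α₃|`, the coefficient
`B₁ = θ₁⁽³⁾ = (1/6)(−α₁(a₂²+a₃²+b₂²+b₃²) + 2α₂a₃b₃ + 2α₃a₂b₂)` vanishes iff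
`a₂ = a₃ = b₂ = b₃ = 0`. -/
theorem B1_eq_zero_iff (a₁ a₂ a₃ b₁ b₂ b₃ α₁ α₂ α₃ : ℝ)
    (h12 : α₂ < α₁) (h23 : α₃ < α₂) (h2abs : |α₃| ≤ α₂) :
    (1 / 6) * (-α₁ * (a₂ ^ 2 + a₃ ^ 2 + b₂ ^ 2 + b₃ ^ 2) + 2 * α₂ * a₃ * b₃ +
        2 * α₃ * a₂ * b₂) = 0 ↔
      a₂ = 0 ∧ a₃ = 0 ∧ b₂ = 0 ∧ b₃ = 0 := by
  obtain ⟨hlo, hhi⟩ := abs_le.mp h2abs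
  have hα₂ : 0 ≤ α₂ := (abs_nonneg α₃).trans h2abs
  constructor
  · intro h
    -- `-6 B₁` equals `(α₁ - α₂) S` plus the three nonnegative terms `h1`, `h2`, `h3`,
    -- where `S` is the sum of the four squares.
    have h1 : 0 ≤ α₂ * (a₃ - b₃) ^ 2 := mul_nonneg hα₂ (sq_nonneg _)
    have h2 : 0 ≤ (α₂ + α₃) / 2 * (a₂ - b₂) ^ 2 :=
      mul_nonneg (by linarith) (sq_nonneg _)
    have h3 : 0 ≤ (α₂ - α₃) / 2 * (a₂ + b₂) ^ 2 :=
      mul_nonneg (by linarith) (sq_nonneg _)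
    have hS : (α₁ - α₂) * (a₂ ^ 2 + a₃ ^ 2 + b₂ ^ 2 + b₃ ^ 2) ≤ 0 := by
      linarith
    have hS' : a₂ ^ 2 + a₃ ^ 2 + b₂ ^ 2 + b₃ ^ 2 ≤ 0 :=
      nonpos_of_mul_nonpos_right hS (sub_pos.mpr h12)
    refine ⟨?_, ?_, ?_, ?_⟩ <;> apply pow_eq_zero_iff two_ne_zero |>.mp <;>
      linarith [sq_nonneg a₂, sq_nonneg a₃, sq_nonneg b₂, sq_nonneg b₃]
  · rintro ⟨rfl, rfl, rfl, rfl⟩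
    simp
end

section
/- Let a, b ∈ ℝ³ and α_1 > α_2 > α_3 with α_2 ≥ |α_3|, and let B_2 = θ_1^{(3)} + θ_2^{(3)} − θ_3^{(3)}. Then B_2 = 0 if and only if a_1 = −b_1, a_2 = −b_2, and a_3 = b_3. -/
/-- with `α₁ > α₂ > α₃`, `α₂ ≥ |α₃|`, the coefficient
`B₂ = θ₁⁽³⁾ + θ₂⁽³⁾ − θ₃⁽³⁾` vanishes iff `a₁ = −b₁`, `a₂ = −b₂` and `a₃ = b₃`. -/
theorem B2_eq_zero_iff (a₁ a₂ a₃ b₁ b₂ b₃ α₁ α₂ α₃ : ℝ)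
    (h12 : α₂ < α₁) (h23 : α₃ < α₂) (h2abs : |α₃| ≤ α₂) :
    ((1 / 6) * (-α₁ * (a₂ ^ 2 + a₃ ^ 2 + b₂ ^ 2 + b₃ ^ 2) + 2 * α₂ * a₃ * b₃ +
          2 * α₃ * a₂ * b₂) +
        (1 / 6) * (-α₂ * (a₁ ^ 2 + a₃ ^ 2 + b₁ ^ 2 + b₃ ^ 2) + 2 * α₁ * a₃ * b₃ +
          2 * α₃ * a₁ * b₁) -
        (1 / 6) * (-α₃ * (a₁ ^ 2 + a₂ ^ 2 + b₁ ^ 2 + b₂ ^ 2) + 2 * α₁ * a₂ * b₂ +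
          2 * α₂ * a₁ * b₁)) = 0 ↔
      a₁ = -b₁ ∧ a₂ = -b₂ ∧ a₃ = b₃ := by
  have h2 : 0 ≤ α₂ := (abs_nonneg α₃).trans h2abs
  constructor
  · intro h
    -- `-6 B₂` is a sum of squares with the positive weights `α₂ - α₃`, `α₁ - α₃`, `α₁ + α₂`.
    have hsum : (α₂ - α₃) * (a₁ + b₁) ^ 2 + (α₁ - α₃) * (a₂ + b₂) ^ 2 +
        (α₁ + α₂) * (a₃ - b₃) ^ 2 = 0 := by
      linear_combination (-6) * h
    have p1 : 0 < α₂ - α₃ := by linarith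
    have p2 : 0 < α₁ - α₃ := by linarith
    have p3 : 0 < α₁ + α₂ := by linarith
    have n1 := mul_nonneg p1.le (sq_nonneg (a₁ + b₁))
    have n2 := mul_nonneg p2.le (sq_nonneg (a₂ + b₂))
    have n3 := mul_nonneg p3.le (sq_nonneg (a₃ - b₃))
    have key : ∀ c x : ℝ, 0 < c → c * x ^ 2 = 0 → x = 0 := fun c x hc hx =>
      pow_eq_zero_iff two_ne_zero |>.mp ((mul_eq_zero.mp hx).resolve_left hc.ne')
    have e1 := key _ (a₁ + b₁) p1 (by linarith)
    have e2 := key _ (a₂ + b₂) p2 (by linarith)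
    have e3 := key _ (a₃ - b₃) p3 (by linarith)
    exact ⟨by linarith, by linarith, by linarith⟩
  · rintro ⟨rfl, rfl, rfl⟩
    ring
end

section
/- Let a, b ∈ ℝ³ and α_1 ≥ α_2 ≥ |α_3|. Then all three of the following hold: θ_1^{(3)} ≤ 0, θ_1^{(3)} + θ_2^{(3)} − θ_3^{(3)} ≤ 0, and θ_1^{(3)} + θ_2^{(3)} + θ_3^{(3)} ≤ 0. -/
/-!
Each of the three quantities is minus a combination of squares with nonnegative coefficients.
In the sums with sign `ε = ±1` on `θ₃`, completing squares gives
`6 (θ₁ + θ₂ + ε θ₃) = -(α₁ + α₂)(a₃ - b₃)² - (α₁ + ε α₃)(a₂ - ε b₂)² - (α₂ + ε α₃)(a₁ - ε b₁)²`,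
and `12 θ₁` is minus the sum of `(α₁ - α₂)(a₃ + b₃)²`, `(α₁ + α₂)(a₃ - b₃)²`,
`(α₁ - α₃)(a₂ + b₂)²` and `(α₁ + α₃)(a₂ - b₂)²`.
The ordering `α₁ ≥ α₂ ≥ |α₃|` makes every coefficient nonnegative.
-/

/-- with `α₁ ≥ α₂ ≥ |α₃|`, the quantities `θ₁⁽³⁾`,
`θ₁⁽³⁾ + θ₂⁽³⁾ − θ₃⁽³⁾` and `θ₁⁽³⁾ + θ₂⁽³⁾ + θ₃⁽³⁾` are all nonpositive. -/
theorem theta3_combinations_nonpos (a₁ a₂ a₃ b₁ b₂ b₃ α₁ α₂ α₃ : ℝ)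
    (h12 : α₂ ≤ α₁) (h2abs : |α₃| ≤ α₂) :
    (1 / 6) * (-α₁ * (a₂ ^ 2 + a₃ ^ 2 + b₂ ^ 2 + b₃ ^ 2) + 2 * α₂ * a₃ * b₃ +
        2 * α₃ * a₂ * b₂) ≤ 0 ∧
    ((1 / 6) * (-α₁ * (a₂ ^ 2 + a₃ ^ 2 + b₂ ^ 2 + b₃ ^ 2) + 2 * α₂ * a₃ * b₃ +
          2 * α₃ * a₂ * b₂) +
        (1 / 6) * (-α₂ * (a₁ ^ 2 + a₃ ^ 2 + b₁ ^ 2 + b₃ ^ 2) + 2 * α₁ * a₃ * b₃ +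
          2 * α₃ * a₁ * b₁) -
        (1 / 6) * (-α₃ * (a₁ ^ 2 + a₂ ^ 2 + b₁ ^ 2 + b₂ ^ 2) + 2 * α₁ * a₂ * b₂ +
          2 * α₂ * a₁ * b₁)) ≤ 0 ∧
    ((1 / 6) * (-α₁ * (a₂ ^ 2 + a₃ ^ 2 + b₂ ^ 2 + b₃ ^ 2) + 2 * α₂ * a₃ * b₃ +
          2 * α₃ * a₂ * b₂) +
        (1 / 6) * (-α₂ * (a₁ ^ 2 + a₃ ^ 2 + b₁ ^ 2 + b₃ ^ 2) + 2 * α₁ * a₃ * b₃ +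
          2 * α₃ * a₁ * b₁) +
        (1 / 6) * (-α₃ * (a₁ ^ 2 + a₂ ^ 2 + b₁ ^ 2 + b₂ ^ 2) + 2 * α₁ * a₂ * b₂ +
          2 * α₂ * a₁ * b₁)) ≤ 0 := by
  obtain ⟨hl, hu⟩ := abs_le.mp h2abs
  have c12 : 0 ≤ α₁ + α₂ := by linarith
  have d12 : 0 ≤ α₁ - α₂ := by linarith
  have c13 : 0 ≤ α₁ + α₃ := by linarith
  have d13 : 0 ≤ α₁ - α₃ := by linarith
  have c23 : 0 ≤ α₂ + α₃ := by linarith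
  have d23 : 0 ≤ α₂ - α₃ := by linarith
  have s3 := mul_nonneg c12 (sq_nonneg (a₃ - b₃))
  have t3 := mul_nonneg d12 (sq_nonneg (a₃ + b₃))
  have s2 := mul_nonneg c13 (sq_nonneg (a₂ - b₂))
  have t2 := mul_nonneg d13 (sq_nonneg (a₂ + b₂))
  have s1 := mul_nonneg c23 (sq_nonneg (a₁ - b₁))
  have t1 := mul_nonneg d23 (sq_nonneg (a₁ + b₁))
  refine ⟨?_, ?_, ?_⟩
  · linarith only [s3, t3, s2, t2]
  · linarith only [s3, t2, t1]
  · linarith only [s3, s2, s1]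
end
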